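/- Let A ∈ ℂ^{L×N} be a generalized incidence matrix of a connected network, let y_L ∈ ℂ^L satisfy Re(y_l) > 0 for every branch l (strictly lossy branches), let y_T ∈ ℂ^N satisfy Re(y_{T,i}) ≥ 0 for every node i, and let Y_N = Aᴴ diag(y_L) A + diag(y_T). Then rank(Y_N) = rank(A) in case y_T = 0, and rank(Y_N) = |N| (Y_N is invertible) in case y_T ≠ 0. -/

import Mathlib

open Matrix

/-!
If `Y x = 0` with `Y = Aᴴ diag(y_L) A + diag(y_T)`, then `0 = Re (xᴴ Y x)` is the sum of the powers
dissipated in the branches, `∑ Re (y_l) |(A x)_l|²`, and in the shunts, `∑ Re (y_{T,i}) |x_i|²`.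
Both are nonnegative and the first is positive unless `A x = 0`; so `A x = 0`, and what is left of
`Y x = 0` is `diag(y_T) x = 0`. Without shunts this gives `ker Y = ker A`. In general, `A x = 0`
says `x_i = a_l x_k` along each branch, so a zero of `x` spreads over its connected component, and
`x` does vanish at every node with `y_{T,i} ≠ 0`.
-/

section Rank

variable {K l m n : Type*} [Field K] [Fintype n]

theorem rank_eq_rank_of_mulVec_eq_zero_iff {A : Matrix l n K} {B : Matrix m n K}
    (h : ∀ x, A *ᵥ x = 0 ↔ B *ᵥ x = 0) : A.rank = B.rank := by
  have hker : LinearMap.ker A.mulVecLin = LinearMap.ker B.mulVecLin := Submodule.ext h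
  have hA := A.mulVecLin.finrank_range_add_finrank_ker
  have hB := B.mulVecLin.finrank_range_add_finrank_ker
  rw [hker, ← hB] at hA
  exact Nat.add_right_cancel hA

theorem isUnit_of_forall_mulVec_eq_zero [DecidableEq n] {A : Matrix n n K}
    (h : ∀ x, A *ᵥ x = 0 → x = 0) : IsUnit A :=
  mulVec_injective_iff_isUnit.1 (LinearMap.ker_eq_bot.1 (ker_mulVecLin_eq_bot_iff.2 h))

end Rank

section Accretive

variable {𝕜 m n : Type*} [RCLike 𝕜] [Fintype m] [Fintype n]

/-- `M` is accretive: its quadratic form `x ↦ xᴴ M x` has nonnegative real part. `M` need not be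
Hermitian, in contrast to `Matrix.PosSemidef`. -/
def IsAccretive (M : Matrix n n 𝕜) : Prop :=
  ∀ x, 0 ≤ RCLike.re (star x ⬝ᵥ M *ᵥ x)

/-- `M` is strictly accretive: its quadratic form `x ↦ xᴴ M x` has positive real part away from
`x = 0`. `M` need not be Hermitian, in contrast to `Matrix.PosDef`. -/
def IsStrictlyAccretive (M : Matrix n n 𝕜) : Prop :=
  ∀ x, x ≠ 0 → 0 < RCLike.re (star x ⬝ᵥ M *ᵥ x)

theorem re_star_dotProduct_diagonal_mulVec [DecidableEq n] (d x : n → 𝕜) :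
    RCLike.re (star x ⬝ᵥ diagonal d *ᵥ x) = ∑ i, RCLike.re (d i) * ‖x i‖ ^ 2 := by
  simp only [dotProduct, mulVec_diagonal, Pi.star_apply, map_sum]
  refine Finset.sum_congr rfl fun i _ => ?_
  rw [mul_left_comm, RCLike.star_def, RCLike.conj_mul, ← RCLike.ofReal_pow, RCLike.re_mul_ofReal]

theorem isAccretive_diagonal [DecidableEq n] {d : n → 𝕜} (hd : ∀ i, 0 ≤ RCLike.re (d i)) :
    IsAccretive (diagonal d) := fun x => by
  rw [re_star_dotProduct_diagonal_mulVec]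
  exact Finset.sum_nonneg fun i _ => mul_nonneg (hd i) (sq_nonneg _)

theorem isStrictlyAccretive_diagonal [DecidableEq n] {d : n → 𝕜}
    (hd : ∀ i, 0 < RCLike.re (d i)) : IsStrictlyAccretive (diagonal d) := fun x hx => by
  obtain ⟨i, hi⟩ := Function.ne_iff.1 hx
  rw [re_star_dotProduct_diagonal_mulVec]
  exact Finset.sum_pos' (fun j _ => mul_nonneg (hd j).le (sq_nonneg _))
    ⟨i, Finset.mem_univ i, mul_pos (hd i) (pow_pos (norm_pos_iff.2 hi) 2)⟩

theorem star_dotProduct_conjTranspose_mul_mul_mulVec {R : Type*} [CommSemiring R] [StarRing R]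
    (A : Matrix m n R) (D : Matrix m m R) (x : n → R) :
    star x ⬝ᵥ (Aᴴ * D * A) *ᵥ x = star (A *ᵥ x) ⬝ᵥ D *ᵥ (A *ᵥ x) := by
  rw [star_mulVec, ← dotProduct_mulVec, mulVec_mulVec, mulVec_mulVec, Matrix.mul_assoc]

theorem conjTranspose_mul_mul_add_mulVec_eq_zero_iff {D : Matrix m m 𝕜} {T : Matrix n n 𝕜}
    (hD : IsStrictlyAccretive D) (hT : IsAccretive T) (A : Matrix m n 𝕜) (x : n → 𝕜) :
    (Aᴴ * D * A + T) *ᵥ x = 0 ↔ A *ᵥ x = 0 ∧ T *ᵥ x = 0 := by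
  have mulVec_of_ker (hAx : A *ᵥ x = 0) : (Aᴴ * D * A + T) *ᵥ x = T *ᵥ x := by
    rw [add_mulVec, ← mulVec_mulVec, hAx, mulVec_zero, zero_add]
  refine ⟨fun hx => ?_, fun ⟨hAx, hTx⟩ => (mulVec_of_ker hAx).trans hTx⟩
  suffices hAx : A *ᵥ x = 0 from ⟨hAx, (mulVec_of_ker hAx).symm.trans hx⟩
  by_contra hAx
  have power_balance : RCLike.re (star (A *ᵥ x) ⬝ᵥ D *ᵥ (A *ᵥ x)) +
      RCLike.re (star x ⬝ᵥ T *ᵥ x) = 0 := by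
    rw [← star_dotProduct_conjTranspose_mul_mul_mulVec, ← map_add, ← dotProduct_add,
      ← add_mulVec, hx, dotProduct_zero, map_zero]
  exact (add_pos_of_pos_of_nonneg (hD _ hAx) (hT x)).ne' power_balance

theorem rank_conjTranspose_mul_mul_of_isStrictlyAccretive {D : Matrix m m 𝕜}
    (hD : IsStrictlyAccretive D) (A : Matrix m n 𝕜) : (Aᴴ * D * A).rank = A.rank := by
  have isAccretive_zero : IsAccretive (0 : Matrix n n 𝕜) := fun x => by simp
  refine rank_eq_rank_of_mulVec_eq_zero_iff fun x => ?_
  simpa using conjTranspose_mul_mul_add_mulVec_eq_zero_iff hD isAccretive_zero A x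

end Accretive

section Network

variable {R L N : Type*}

/-- The graph on the nodes that joins the two ends of each branch; parallel branches are merged,
which does not affect reachability. -/
def branchGraph (e1 e2 : L → N) : SimpleGraph N :=
  SimpleGraph.fromRel fun i k => ∃ l, e1 l = i ∧ e2 l = k

/-- `A` is the generalized incidence matrix of the network whose branch `l` runs from `e1 l` to
`e2 l` and has tap ratio `a l`. -/
structure IsGeneralizedIncidence [Ring R] [DecidableEq N] (e1 e2 : L → N) (a : L → R)
    (A : Matrix L N R) : Prop where
  ends_ne : ∀ l, e1 l ≠ e2 l
  tap_ne_zero : ∀ l, a l ≠ 0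
  apply_eq : ∀ l j, A l j = if j = e1 l then 1 else if j = e2 l then -(a l) else 0

/-- The admittance matrix `Y_N` of a network with branch admittances `yL` and shunt admittances
`yT`. -/
def admittanceMatrix [Ring R] [StarRing R] [Fintype L] [DecidableEq L] [DecidableEq N]
    (A : Matrix L N R) (yL : L → R) (yT : N → R) : Matrix N N R :=
  Aᴴ * diagonal yL * A + diagonal yT

namespace IsGeneralizedIncidence

variable [Ring R] [Fintype N] [DecidableEq N] {e1 e2 : L → N} {a : L → R} {A : Matrix L N R}

theorem mulVec_apply (hA : IsGeneralizedIncidence e1 e2 a A) (x : N → R) (l : L) :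
    (A *ᵥ x) l = x (e1 l) - a l * x (e2 l) := by
  have row_eq : A l = Pi.single (e1 l) 1 - Pi.single (e2 l) (a l) := by
    ext j
    have := hA.ends_ne l
    simp only [hA.apply_eq, Pi.sub_apply, Pi.single_apply]
    grind
  rw [mulVec, row_eq, sub_dotProduct, single_dotProduct, single_dotProduct, one_mul]

theorem eq_zero_of_adj [NoZeroDivisors R] (hA : IsGeneralizedIncidence e1 e2 a A) {x : N → R}
    (hx : A *ᵥ x = 0) {i j : N} (hij : (branchGraph e1 e2).Adj i j) (hi : x i = 0) :
    x j = 0 := by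
  have drop_eq (l : L) : x (e1 l) = a l * x (e2 l) := by
    rw [← sub_eq_zero, ← hA.mulVec_apply, hx, Pi.zero_apply]
  obtain ⟨-, ⟨l, rfl, rfl⟩ | ⟨l, rfl, rfl⟩⟩ := (SimpleGraph.fromRel_adj _ _ _).1 hij
  · exact (mul_eq_zero.1 ((drop_eq l).symm.trans hi)).resolve_left (hA.tap_ne_zero l)
  · rw [drop_eq, hi, mul_zero]

theorem eq_zero_of_reachable [NoZeroDivisors R] (hA : IsGeneralizedIncidence e1 e2 a A)
    {x : N → R} (hx : A *ᵥ x = 0) {i j : N} (hij : (branchGraph e1 e2).Reachable i j)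
    (hi : x i = 0) : x j = 0 := by
  rw [SimpleGraph.reachable_iff_reflTransGen] at hij
  induction hij with
  | refl => exact hi
  | tail _ hadj ih => exact hA.eq_zero_of_adj hx hadj ih

end IsGeneralizedIncidence

variable {𝕜 : Type*} [RCLike 𝕜] [Fintype L] [Fintype N] [DecidableEq L] [DecidableEq N]

theorem rank_admittanceMatrix_zero (A : Matrix L N 𝕜) {yL : L → 𝕜}
    (hyL : ∀ l, 0 < RCLike.re (yL l)) : (admittanceMatrix A yL 0).rank = A.rank := by
  rw [admittanceMatrix, diagonal_zero', add_zero,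
    rank_conjTranspose_mul_mul_of_isStrictlyAccretive (isStrictlyAccretive_diagonal hyL)]

theorem IsGeneralizedIncidence.isUnit_admittanceMatrix {e1 e2 : L → N} {a : L → 𝕜}
    {A : Matrix L N 𝕜} (hA : IsGeneralizedIncidence e1 e2 a A)
    {yL : L → 𝕜} (hyL : ∀ l, 0 < RCLike.re (yL l))
    {yT : N → 𝕜} (hyT : ∀ i, 0 ≤ RCLike.re (yT i))
    (hshunt : ∀ j, ∃ i, yT i ≠ 0 ∧ (branchGraph e1 e2).Reachable i j) :
    IsUnit (admittanceMatrix A yL yT) := by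
  refine isUnit_of_forall_mulVec_eq_zero fun x hx => funext fun j => ?_
  obtain ⟨hAx, hTx⟩ := (conjTranspose_mul_mul_add_mulVec_eq_zero_iff
    (isStrictlyAccretive_diagonal hyL) (isAccretive_diagonal hyT) A x).1 hx
  obtain ⟨i, hi, hij⟩ := hshunt j
  have hxi : yT i * x i = 0 := by rw [← mulVec_diagonal, hTx, Pi.zero_apply]
  exact hA.eq_zero_of_reachable hAx hij ((mul_eq_zero.1 hxi).resolve_left hi)

end Network

theorem stmt15_general {𝕜 L N : Type*} [RCLike 𝕜] [Fintype L] [Fintype N] [DecidableEq L]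
    [DecidableEq N] {e1 e2 : L → N} {a : L → 𝕜} {A : Matrix L N 𝕜}
    (hA : IsGeneralizedIncidence e1 e2 a A)
    {yL : L → 𝕜} (hyL : ∀ l, 0 < RCLike.re (yL l))
    {yT : N → 𝕜} (hyT : ∀ i, 0 ≤ RCLike.re (yT i)) :
    (yT = 0 → (admittanceMatrix A yL yT).rank = A.rank) ∧
    ((∀ j, ∃ i, yT i ≠ 0 ∧ (branchGraph e1 e2).Reachable i j) →
      (admittanceMatrix A yL yT).rank = Fintype.card N ∧ IsUnit (admittanceMatrix A yL yT)) := by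
  refine ⟨?_, fun hshunt => ?_⟩
  · rintro rfl
    exact rank_admittanceMatrix_zero A hyL
  · have hunit := hA.isUnit_admittanceMatrix hyL hyT hshunt
    exact ⟨rank_of_isUnit _ hunit, hunit⟩

/-- Theorem 1 under strict lossiness. Let `A ∈ ℂ^{L×N}` be a
generalized incidence matrix of a connected network, `y_L ∈ ℂ^L` with `Re (y_L l) > 0`
for every branch (strictly lossy branches), `y_T ∈ ℂ^N` with `Re (y_T i) ≥ 0` for
every node, and `Y_N = Aᴴ diag(y_L) A + diag(y_T)`. Then `rank Y_N = rank A` when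
`y_T = 0`, and `rank Y_N = |N|` (i.e. `Y_N` is invertible) when `y_T ≠ 0`. -/
theorem stmt15 {L N : Type*} [Fintype L] [Fintype N] [DecidableEq N] [DecidableEq L]
    [Nonempty L] [Nonempty N]
    (e1 e2 : L → N) (a : L → ℂ)
    (hends : ∀ l, e1 l ≠ e2 l) (ha : ∀ l, a l ≠ 0)
    (A : Matrix L N ℂ)
    (hA : ∀ l j, A l j = if j = e1 l then 1 else if j = e2 l then -(a l) else 0)
    (hconn : (SimpleGraph.fromRel fun i k => ∃ l, e1 l = i ∧ e2 l = k).Connected)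
    (yL : L → ℂ) (hyL : ∀ l, 0 < (yL l).re)
    (yT : N → ℂ) (hyT : ∀ i, 0 ≤ (yT i).re) :
    (yT = 0 → (Aᴴ * Matrix.diagonal yL * A + Matrix.diagonal yT).rank = A.rank) ∧
    (yT ≠ 0 → (Aᴴ * Matrix.diagonal yL * A + Matrix.diagonal yT).rank = Fintype.card N ∧
      IsUnit (Aᴴ * Matrix.diagonal yL * A + Matrix.diagonal yT)) := by
  have ⟨hzero, hshunt⟩ := stmt15_general ⟨hends, ha, hA⟩ hyL hyT
  exact ⟨hzero, fun hne => hshunt fun j =>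
    (Function.ne_iff.1 hne).imp fun i hi => ⟨hi, hconn.preconnected i j⟩⟩
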